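/- Let Y be a real-valued random variable with E|Y| < ∞ and cumulative distribution function F, let u ∈ (0,1), and suppose there exist θ_u ∈ ℝ, c > 0 and δ > 0 such that F(θ_u) = u, F(s) − u ≥ c·(s − θ_u) for all s ∈ [θ_u, θ_u + δ], and u − F(s) ≥ c·(θ_u − s) for all s ∈ [θ_u − δ, θ_u]. Then for every θ with |θ − θ_u| ≤ δ, E[ρ_u(Y − θ)] − E[ρ_u(Y − θ_u)] ≥ (c/2)·(θ − θ_u)². -/

import Mathlib

open MeasureTheory

/-- The check (quantile loss) function at level `u`:
`ρ_u(x) = x * (u - 1{x < 0})`. -/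
noncomputable def checkFun (u x : ℝ) : ℝ := x * (u - if x < 0 then 1 else 0)

lemma checkFun_subgrad (u y a b : ℝ) :
    (b - a) * ((if y ≤ a then 1 else 0) - u) ≤ checkFun u (y - b) - checkFun u (y - a) := by
  unfold checkFun
  split_ifs <;> nlinarith

lemma checkFun_eq (u x : ℝ) : checkFun u x = u * x + max (-x) 0 := by
  unfold checkFun
  split_ifs with h
  · rw [max_eq_left (by linarith)]; ring
  · rw [max_eq_right (by linarith)]; ring

lemma checkFun_integrable {Ω : Type*} [MeasurableSpace Ω] (μ : Measure Ω)
    [IsProbabilityMeasure μ] (Y : Ω → ℝ) (hY : Integrable Y μ) (u a : ℝ) :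
    Integrable (fun ω => checkFun u (Y ω - a)) μ := by
  simp only [checkFun_eq]
  have h : Integrable (fun ω => Y ω - a) μ := hY.sub (integrable_const a)
  exact (h.const_mul u).add h.neg.pos_part

lemma checkFun_step {Ω : Type*} [MeasurableSpace Ω] (μ : Measure Ω)
    [IsProbabilityMeasure μ] (Y : Ω → ℝ) (hY : Integrable Y μ) (u a b : ℝ) :
    (b - a) * ((μ {ω | Y ω ≤ a}).toReal - u) ≤
      (∫ ω, checkFun u (Y ω - b) ∂μ) - (∫ ω, checkFun u (Y ω - a) ∂μ) := by
  have hm : NullMeasurableSet {ω | Y ω ≤ a} μ :=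
    nullMeasurableSet_le hY.1.aemeasurable aemeasurable_const
  have hind : (fun ω => if Y ω ≤ a then (1 : ℝ) else 0)
      = Set.indicator {ω | Y ω ≤ a} (fun _ => (1 : ℝ)) := by
    funext ω; simp [Set.indicator_apply]
  have hi : Integrable (fun ω => if Y ω ≤ a then (1 : ℝ) else 0) μ := by
    rw [hind]
    exact (integrable_const (1 : ℝ)).indicator₀ hm
  have he : ∫ ω, (if Y ω ≤ a then (1 : ℝ) else 0) ∂μ = (μ {ω | Y ω ≤ a}).toReal := by
    rw [hind, integral_indicator₀ hm]
    simp [Measure.real]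
  rw [← integral_sub (checkFun_integrable μ Y hY u b) (checkFun_integrable μ Y hY u a), ← he]
  have h2 : (b - a) * ((∫ ω, (if Y ω ≤ a then (1 : ℝ) else 0) ∂μ) - u)
      = ∫ ω, (b - a) * ((if Y ω ≤ a then (1 : ℝ) else 0) - u) ∂μ := by
    rw [integral_const_mul, integral_sub hi (integrable_const u)]
    simp
  rw [h2]
  exact integral_mono ((hi.sub (integrable_const u)).const_mul _)
    ((checkFun_integrable μ Y hY u b).sub (checkFun_integrable μ Y hY u a))
    (fun ω => checkFun_subgrad u (Y ω) a b)

/-- Quadratic growth of the excess expected check loss. Let `Y` be an integrable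
real random variable with cdf `F`, let `u ∈ (0,1)`, and suppose there exist
`θ_u ∈ ℝ`, `c > 0` and `δ > 0` such that `F θ_u = u`,
`F s - u ≥ c (s - θ_u)` for `s ∈ [θ_u, θ_u + δ]`, and
`u - F s ≥ c (θ_u - s)` for `s ∈ [θ_u - δ, θ_u]`. Then for every `θ` with
`|θ - θ_u| ≤ δ`, `E[ρ_u(Y - θ)] - E[ρ_u(Y - θ_u)] ≥ (c/2) (θ - θ_u)²`. -/
theorem expected_checkLoss_quadratic_growth
    {Ω : Type*} [MeasurableSpace Ω] (μ : Measure Ω) [IsProbabilityMeasure μ]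
    (Y : Ω → ℝ) (hY : Integrable Y μ)
    (F : ℝ → ℝ) (hF : ∀ s : ℝ, F s = (μ {ω | Y ω ≤ s}).toReal)
    (u : ℝ) (hu : u ∈ Set.Ioo (0 : ℝ) 1)
    (θu c δ : ℝ) (hc : 0 < c) (hδ : 0 < δ)
    (hFθu : F θu = u)
    (hright : ∀ s ∈ Set.Icc θu (θu + δ), F s - u ≥ c * (s - θu))
    (hleft : ∀ s ∈ Set.Icc (θu - δ) θu, u - F s ≥ c * (θu - s)) :
    ∀ θ : ℝ, |θ - θu| ≤ δ →
      (∫ ω, checkFun u (Y ω - θ) ∂μ) - (∫ ω, checkFun u (Y ω - θu) ∂μ) ≥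
        c / 2 * (θ - θu) ^ 2 := by
  intro θ hθ
  have hstep := checkFun_step μ Y hY u
  simp only [← hF] at hstep
  set G : ℝ → ℝ := fun t => ∫ ω, checkFun u (Y ω - t) ∂μ with hG
  change G θ - G θu ≥ _
  replace hstep : ∀ a b, (b - a) * (F a - u) ≤ G b - G a := hstep
  have hkey : ∀ n : ℕ, 0 < n → c / 2 * (θ - θu) ^ 2 ≤ (G θ - G θu) + c / 2 * (θ - θu) ^ 2 / n := by
    intro n hn
    have hn' : (0 : ℝ) < n := by exact_mod_cast hn
    obtain ⟨h, hh⟩ : ∃ h, h = (θ - θu) / n := ⟨_, rfl⟩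
    have hnh : θ - θu = n * h := by rw [hh]; field_simp
    have hind : ∀ k : ℕ, k ≤ n → c * h ^ 2 * (k * (k - 1) / 2) ≤ G (θu + k * h) - G θu := by
      intro k
      induction k with
      | zero => intro _; simp
      | succ k ih =>
        intro hk
        have ih' := ih (by omega)
        have hkn : (k : ℝ) ≤ n := by exact_mod_cast (by omega : k ≤ n)
        have hk0 : (0 : ℝ) ≤ k := by positivity
        have hs := hstep (θu + k * h) (θu + (k + 1 : ℕ) * h)
        push_cast at hs ⊢
        have hb : k * |h| ≤ δ := by
          rw [hnh, abs_mul, abs_of_pos hn'] at hθ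
          exact le_trans (mul_le_mul_of_nonneg_right hkn (abs_nonneg h)) hθ
        have hm : c * h ^ 2 * k ≤ h * (F (θu + k * h) - u) := by
          rcases le_total 0 h with h0 | h0
          · rw [abs_of_nonneg h0] at hb
            have := hright (θu + k * h) ⟨by nlinarith, by linarith⟩
            nlinarith
          · rw [abs_of_nonpos h0] at hb
            have := hleft (θu + k * h) ⟨by linarith, by nlinarith⟩
            nlinarith
        have e : (θu + (k + 1) * h - (θu + k * h)) = h := by ring
        rw [e] at hs
        nlinarith
    have := hind n le_rfl
    rw [← hnh, add_sub_cancel] at this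
    have e : c / 2 * (θ - θu) ^ 2 / n = c * h ^ 2 * n / 2 := by
      rw [hnh]; field_simp
    rw [e, hnh]
    nlinarith
  have hlim : Filter.Tendsto (fun n : ℕ => (G θ - G θu) + c / 2 * (θ - θu) ^ 2 / n)
      Filter.atTop (nhds ((G θ - G θu) + 0)) :=
    tendsto_const_nhds.add (tendsto_const_div_atTop_nhds_zero_nat _)
  rw [add_zero] at hlim
  exact ge_of_tendsto hlim (Filter.eventually_atTop.2 ⟨1, fun n hn => hkey n hn⟩)
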